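/- If A is a brick-finite finite-dimensional algebra over an algebraically closed field and A has rank n (i.e. exactly n isomorphism classes of simple A-modules), then every Hom-orthogonal set of finite-dimensional A-modules has at most n elements; in particular, there is no Hom-orthogonal set consisting of n+1 modules. -/

import Mathlib

universe u v

open Module

/-- A finite-dimensional left module over the `k`-algebra `A`. -/
structure FDMod (k A : Type u) [Field k] [Ring A] [Algebra k A] : Type (u + 1) where
  carrier : Type u
  [addCommGroup : AddCommGroup carrier]
  [moduleK : Module k carrier]
  [moduleA : Module A carrier]
  [tower : IsScalarTower k A carrier]
  [fd : FiniteDimensional k carrier]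

attribute [instance] FDMod.addCommGroup FDMod.moduleK FDMod.moduleA FDMod.tower FDMod.fd

variable {k A : Type u} [Field k] [Ring A] [Algebra k A]

/-- `M` is a brick: `M ≠ 0` and every `A`-endomorphism of `M` is a `k`-scalar,
i.e. `End_A(M) ≅ k`. -/
def FDMod.IsBrick (M : FDMod k A) : Prop :=
  Nontrivial M.carrier ∧ ∀ f : M.carrier →ₗ[A] M.carrier, ∃ c : k, ∀ x : M.carrier, f x = c • x

/-- `M` and `N` are Hom-orthogonal: `Hom_A(M,N) = 0` and `Hom_A(N,M) = 0`. -/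
def FDMod.HomOrth (M N : FDMod k A) : Prop :=
  (∀ f : M.carrier →ₗ[A] N.carrier, f = 0) ∧ (∀ f : N.carrier →ₗ[A] M.carrier, f = 0)

/-- `M` and `N` are isomorphic as `A`-modules. -/
def FDMod.Iso (M N : FDMod k A) : Prop :=
  Nonempty (M.carrier ≃ₗ[A] N.carrier)

/-- A family of modules forms a Hom-orthogonal set: the modules are nonzero,
pairwise non-isomorphic and pairwise Hom-orthogonal. -/
def HomOrthFamily {I : Type v} (X : I → FDMod k A) : Prop :=
  (∀ i, Nontrivial (X i).carrier) ∧
  (∀ i j, i ≠ j → ¬(X i).Iso (X j)) ∧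
  (∀ i j, i ≠ j → (X i).HomOrth (X j))

/-- `A` is brick-finite: there are only finitely many isomorphism classes of bricks. -/
def BrickFinite (k A : Type u) [Field k] [Ring A] [Algebra k A] : Prop :=
  ∃ (m : ℕ) (f : Fin m → FDMod k A), ∀ N : FDMod k A, N.IsBrick → ∃ i, N.Iso (f i)

/-- `A` has rank `n`: there are exactly `n` isomorphism classes of simple modules. -/
def HasRank (k A : Type u) [Field k] [Ring A] [Algebra k A] (n : ℕ) : Prop :=
  ∃ S : Fin n → FDMod k A,
    (∀ i, IsSimpleModule A (S i).carrier) ∧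
    (∀ i j, i ≠ j → ¬(S i).Iso (S j)) ∧
    (∀ T : FDMod k A, IsSimpleModule A T.carrier → ∃ i, T.Iso (S i))

/-!
A torsion class is determined by the bricks it contains, so a brick-finite algebra has only finitely
many torsion classes, and each of them is reached from the class of all modules by a chain of
covers. Descending along this chain, every torsion class has enough Ext-projective modules: if `T`
covers `T₁`, some module `B` with no nonzero map from `T₁` is a simple object of `T`, and a right
minimal Ext-projective cover in `T` of a module of `T₁` admits no nonzero map to `B`, hence lies in
`T₁`.

If `P` is Ext-projective with respect to `T`, with minimal projective presentation `R → Q → P`,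
then `dim Hom(Q, X) - dim Hom(R, X)` depends only on the composition factors of `X`, equals
`dim Hom(P, X)` for `X` in `T`, and is at most `0` whenever `Hom(P, X) = 0`. More than `n`
Hom-orthogonal modules `Y j` would satisfy a nontrivial relation `∑ c j [Y j] = 0` in the
Grothendieck group, with some `c i > 0`. Let `T` consist of the modules without nonzero maps to the
`Y j` with `c j < 0`; it contains the `Y j` with `c j > 0`, so there is an Ext-projective `P` in `T`
mapping onto `Y i`. All terms of `∑ c j (dim Hom(Q, Y j) - dim Hom(R, Y j))` are then nonnegative
and the `i`-th is positive, although the sum is `0`.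
-/

open Function

/-! ### Linear algebra -/

section LinearAlgebra

variable {R M N L : Type*} [Ring R] [AddCommGroup M] [Module R M] [AddCommGroup N] [Module R N]
  [AddCommGroup L] [Module R L]

theorem exists_comp_eq_of_ker_le {g : M →ₗ[R] N} (hg : Surjective g) {h : M →ₗ[R] L}
    (hgh : g.ker ≤ h.ker) : ∃ u : N →ₗ[R] L, u ∘ₗ g = h := by
  refine ⟨g.ker.liftQ h hgh ∘ₗ (g.quotKerEquivOfSurjective hg).symm.toLinearMap, ?_⟩
  ext x
  have hx : (g.quotKerEquivOfSurjective hg).symm (g x) = g.ker.mkQ x :=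
    (LinearEquiv.symm_apply_eq _).2 rfl
  simp [hx]

theorem bijective_of_range_le_range_comp [IsNoetherian R N] {f : M →ₗ[R] N}
    {e : f.range →ₗ[R] f.range} (h : f.range ≤ (f.range.subtype ∘ₗ e ∘ₗ f.rangeRestrict).range) :
    Bijective e := by
  refine IsNoetherian.bijective_of_surjective_endomorphism e fun y => ?_
  obtain ⟨x, hx⟩ := h y.2
  exact ⟨_, Subtype.ext hx⟩

/-- A linear map `π` is right minimal if every endomorphism `θ` of its source with `π ∘ θ = π` is
an automorphism. -/
def IsRightMinimal (π : M →ₗ[R] N) : Prop :=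
  ∀ θ : M →ₗ[R] M, π ∘ₗ θ = π → Bijective θ

theorem exists_retract_isRightMinimal [IsArtinian R M] [IsNoetherian R M] (π : M →ₗ[R] N) :
    ∃ (S : Submodule R M) (r : M →ₗ[R] S), r ∘ₗ S.subtype = LinearMap.id ∧
      π ∘ₗ S.subtype ∘ₗ r = π ∧ IsRightMinimal (π ∘ₗ S.subtype) := by
  obtain ⟨e, he, hmin⟩ := exists_minimalFor_of_wellFoundedLT
    (fun e : M →ₗ[R] M => π ∘ₗ e = π) LinearMap.range ⟨LinearMap.id, π.comp_id⟩
  have bijective_of_comp (θ : e.range →ₗ[R] e.range)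
      (hθ : π ∘ₗ e.range.subtype ∘ₗ θ = π ∘ₗ e.range.subtype) : Bijective θ := by
    refine bijective_of_range_le_range_comp (hmin ?_ ?_)
    · calc π ∘ₗ e.range.subtype ∘ₗ θ ∘ₗ e.rangeRestrict
          = (π ∘ₗ e.range.subtype ∘ₗ θ) ∘ₗ e.rangeRestrict := rfl
        _ = π ∘ₗ e := by rw [hθ]; rfl
        _ = π := he
    · rintro _ ⟨x, rfl⟩
      exact (θ (e.rangeRestrict x)).2
  let σ := LinearEquiv.ofBijective (e.rangeRestrict ∘ₗ e.range.subtype)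
    (bijective_of_comp _ (LinearMap.ext fun x => LinearMap.congr_fun he x))
  refine ⟨e.range, σ.symm.toLinearMap ∘ₗ e.rangeRestrict, ?_, ?_, bijective_of_comp⟩
  · exact LinearMap.ext σ.symm_apply_apply
  · ext x
    calc π (σ.symm (e.rangeRestrict x))
        = π (e (σ.symm (e.rangeRestrict x))) := (LinearMap.congr_fun he _).symm
      _ = π (e x) := congrArg (π ∘ Subtype.val) (σ.apply_symm_apply (e.rangeRestrict x))
      _ = π x := LinearMap.congr_fun he x

theorem IsRightMinimal.eq_zero_of_map_ker_eq_range [Module.Projective R M] {ρ : M →ₗ[R] N}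
    (hρ : IsRightMinimal ρ) (hsurj : Surjective ρ) {g : M →ₗ[R] L}
    (hg : ρ.ker.map g = g.range) : g = 0 := by
  have hker : Surjective (ρ ∘ₗ g.ker.subtype) := by
    intro y
    obtain ⟨x, rfl⟩ := hsurj y
    obtain ⟨z, hz, hzx⟩ : g x ∈ ρ.ker.map g := hg ▸ LinearMap.mem_range_self g x
    exact ⟨⟨x - z, by simp [hzx]⟩, by simpa using hz⟩
  obtain ⟨φ, hφ⟩ := Module.projective_lifting_property _ ρ hker
  ext x
  obtain ⟨y, rfl⟩ := (hρ (g.ker.subtype ∘ₗ φ) hφ).surjective x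
  exact (φ y).2

theorem exists_pushout (π : M →ₗ[R] N) (hπ : Surjective π) (γ : π.ker →ₗ[R] L) :
    ∃ (G : Submodule R (M × L)) (g : ((M × L) ⧸ G) →ₗ[R] N) (j : L →ₗ[R] (M × L) ⧸ G)
      (a : M →ₗ[R] (M × L) ⧸ G), Surjective g ∧ Injective j ∧ j.range = g.ker ∧ g ∘ₗ a = π ∧
        a ∘ₗ π.ker.subtype = j ∘ₗ γ := by
  let G := (LinearMap.prod π.ker.subtype (-γ)).range
  have hG : G ≤ (π ∘ₗ LinearMap.fst R M L).ker := by
    rintro _ ⟨x, rfl⟩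
    exact x.2
  have comm (x : π.ker) : G.mkQ ((x : M), (0 : L)) = G.mkQ ((0 : M), γ x) := by
    rw [← sub_eq_zero, ← map_sub, ← LinearMap.mem_ker, Submodule.ker_mkQ]
    exact ⟨x, by ext <;> simp⟩
  refine ⟨G, G.liftQ _ hG, G.mkQ ∘ₗ LinearMap.inr R M L, G.mkQ ∘ₗ LinearMap.inl R M L,
    fun y => ?_, ?_, le_antisymm ?_ ?_, rfl, LinearMap.ext comm⟩
  · obtain ⟨x, rfl⟩ := hπ y
    exact ⟨G.mkQ (x, 0), rfl⟩
  · refine (injective_iff_map_eq_zero _).2 fun x hx => ?_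
    obtain ⟨w, hw⟩ : ((0 : M), x) ∈ G := (Submodule.Quotient.mk_eq_zero G).1 hx
    obtain rfl : w = 0 := Subtype.ext (congrArg Prod.fst hw)
    simpa using (congrArg Prod.snd hw).symm
  · rintro _ ⟨x, rfl⟩
    exact map_zero π
  · intro z hz
    obtain ⟨⟨x, y⟩, rfl⟩ := G.mkQ_surjective z
    refine ⟨γ ⟨x, hz⟩ + y, ?_⟩
    calc G.mkQ ((0 : M), γ ⟨x, hz⟩ + y)
        = G.mkQ ((0 : M), γ ⟨x, hz⟩) + G.mkQ ((0 : M), y) := by rw [← map_add]; simp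
      _ = G.mkQ (x, y) := by rw [← comm, ← map_add]; simp

/-- The trace of `U` in `M`: the sum of the images of all linear maps from `U` to `M`. -/
def traceSubmodule (R U M : Type*) [Ring R] [AddCommGroup U] [Module R U] [AddCommGroup M]
    [Module R M] : Submodule R M :=
  ⨆ f : U →ₗ[R] M, f.range

theorem range_le_traceSubmodule (f : L →ₗ[R] M) : f.range ≤ traceSubmodule R L M :=
  le_iSup LinearMap.range f

theorem map_traceSubmodule_le (g : M →ₗ[R] N) :
    (traceSubmodule R L M).map g ≤ traceSubmodule R L N := by
  rw [traceSubmodule, Submodule.map_iSup]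
  exact iSup_le fun f => (LinearMap.range_comp f g).symm.trans_le (range_le_traceSubmodule _)

end LinearAlgebra

/-! ### Approximations and bricks -/

namespace FDMod

instance : CoeSort (FDMod k A) (Type u) := ⟨FDMod.carrier⟩

instance {M : Type*} [AddCommGroup M] [Module k M] [Module A M] [IsScalarTower k A M]
    [FiniteDimensional k M] (S : Submodule A M) : FiniteDimensional k S :=
  Module.Finite.of_injective (S.subtype.restrictScalars k) Subtype.val_injective

instance (X Y : FDMod k A) : FiniteDimensional k (X →ₗ[A] Y) :=
  Module.Finite.of_injective (LinearMap.restrictScalarsₗ k A X Y k)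
    (LinearMap.restrictScalars_injective k)

instance (X : FDMod k A) : IsNoetherian A X := isNoetherian_of_tower k inferInstance

instance (X : FDMod k A) : IsArtinian A X := isArtinian_of_tower k inferInstance

instance (X : FDMod k A) : Module.Finite A X := Module.Finite.of_restrictScalars_finite k A X

theorem exists_tuple_forall_mem_traceSubmodule (U : FDMod k A) :
    ∃ (r : ℕ) (u : Fin r → U), ∀ X : FDMod k A, ∀ x ∈ traceSubmodule A U X,
      ∃ g : (Fin r → U) →ₗ[A] X, g u = x := by
  let b := Module.finBasis k U
  refine ⟨_, b, fun X x hx => ?_⟩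
  refine Submodule.iSup_induction _
    (motive := fun x => ∃ g : (Fin (finrank k U) → U) →ₗ[A] X, g b = x) hx ?_ ⟨0, rfl⟩ ?_
  · rintro f _ ⟨v, rfl⟩
    refine ⟨∑ i, b.repr v i • f ∘ₗ LinearMap.proj i, ?_⟩
    have hv : f v = ∑ i, b.repr v i • f (b i) := by
      conv_lhs => rw [← b.sum_repr v]
      simp only [map_sum, LinearMap.map_smul_of_tower]
    simp [hv]
  · rintro _ _ ⟨g, rfl⟩ ⟨h, rfl⟩
    exact ⟨g + h, rfl⟩

theorem exists_rightApproximation (P X : FDMod k A) :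
    ∃ (s : ℕ) (p : (Fin s → P) →ₗ[A] X), ∀ f : P →ₗ[A] X, ∃ f', p ∘ₗ f' = f := by
  let b := Module.finBasis k (P →ₗ[A] X)
  refine ⟨_, ∑ i, b i ∘ₗ LinearMap.proj i,
    fun f => ⟨LinearMap.pi fun i => b.repr f i • LinearMap.id, ?_⟩⟩
  ext x
  have hx : ∑ i, b.repr f i • b i x = f x := by
    simpa only [LinearMap.sum_apply, LinearMap.smul_apply] using
      LinearMap.congr_fun (b.sum_repr f) x
  simpa [LinearMap.map_smul_of_tower] using hx

theorem exists_surjective_of_projective [FiniteDimensional k A] (X : FDMod k A) :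
    ∃ (P : FDMod k A) (p : P →ₗ[A] X), Module.Projective A P ∧ Surjective p := by
  obtain ⟨n, p, hp⟩ := Module.Finite.exists_fin' A X
  exact ⟨⟨Fin n → A⟩, p, inferInstanceAs (Module.Projective A (Fin n → A)), hp⟩

/-- `M` is a division brick if it is nonzero and its endomorphism ring is a division ring. This is
the notion of brick over an arbitrary ground field; see `IsDivisionBrick.isBrick` for the
algebraically closed case. -/
def IsDivisionBrick (M : FDMod k A) : Prop :=
  Nontrivial M ∧ ∀ f : M →ₗ[A] M, f ≠ 0 → Bijective f

theorem IsDivisionBrick.isBrick [IsAlgClosed k] {M : FDMod k A} (hM : M.IsDivisionBrick) :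
    M.IsBrick := by
  obtain ⟨hnt, hbij⟩ := hM
  refine ⟨hnt, fun f => ?_⟩
  obtain ⟨c, hc⟩ := Module.End.exists_eigenvalue (K := k) (f.restrictScalars k)
  obtain ⟨v, hv⟩ := hc.exists_hasEigenvector
  let g : M →ₗ[A] M := f - c • LinearMap.id
  have hgv : g v = 0 := sub_eq_zero.2 hv.apply_eq_smul
  have hg : g = 0 := by
    by_contra hne
    exact hv.2 ((hbij g hne).injective (hgv.trans (map_zero g).symm))
  exact ⟨c, fun x => sub_eq_zero.1 (LinearMap.congr_fun hg x)⟩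

theorem exists_isDivisionBrick (X : FDMod k A) [Nontrivial X] :
    ∃ B : FDMod k A, B.IsDivisionBrick ∧ (∃ p : X →ₗ[A] B, Surjective p) ∧
      ∃ i : B →ₗ[A] X, Injective i := by
  obtain ⟨f, hf, hmin⟩ := exists_minimalFor_of_wellFoundedLT
    (fun f : X →ₗ[A] X => f ≠ 0) LinearMap.range ⟨LinearMap.id, one_ne_zero⟩
  refine ⟨⟨f.range⟩, ⟨?_, fun e he => bijective_of_range_le_range_comp (hmin ?_ ?_)⟩,
    ⟨f.rangeRestrict, f.surjective_rangeRestrict⟩, f.range.subtype, Subtype.val_injective⟩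
  · exact Submodule.nontrivial_iff_ne_bot.2 (mt LinearMap.range_eq_bot.1 hf)
  · refine fun h => he (LinearMap.ext fun y => ?_)
    obtain ⟨x, rfl⟩ := f.surjective_rangeRestrict y
    exact Subtype.ext (LinearMap.congr_fun h x)
  · rintro _ ⟨x, rfl⟩
    exact (e (f.rangeRestrict x)).2

end FDMod

/-- There are only finitely many isomorphism classes of division bricks. -/
def DivisionBrickFinite (k A : Type u) [Field k] [Ring A] [Algebra k A] : Prop :=
  ∃ (m : ℕ) (f : Fin m → FDMod k A), ∀ N : FDMod k A, N.IsDivisionBrick → ∃ i, N.Iso (f i)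

theorem BrickFinite.divisionBrickFinite [IsAlgClosed k] (h : BrickFinite k A) :
    DivisionBrickFinite k A := by
  obtain ⟨m, f, hf⟩ := h
  exact ⟨m, f, fun N hN => hf N hN.isBrick⟩

/-! ### Torsion classes -/

/-- A torsion class: a class of modules containing zero, closed under quotients and extensions. -/
structure TorsionClass (k A : Type u) [Field k] [Ring A] [Algebra k A] where
  carrier : Set (FDMod k A)
  mem_of_subsingleton' : ∀ X : FDMod k A, Subsingleton X → X ∈ carrier
  mem_of_surjective' : ∀ {X Y : FDMod k A}, X ∈ carrier → ∀ f : X →ₗ[A] Y, Surjective f →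
    Y ∈ carrier
  mem_of_ker_mem' : ∀ {X Z : FDMod k A}, Z ∈ carrier → ∀ g : X →ₗ[A] Z, Surjective g →
    ⟨g.ker⟩ ∈ carrier → X ∈ carrier

namespace TorsionClass

instance : SetLike (TorsionClass k A) (FDMod k A) where
  coe := carrier
  coe_injective S T h := by cases S; cases T; congr

instance : PartialOrder (TorsionClass k A) := .ofSetLike (TorsionClass k A) (FDMod k A)

section Closure

variable {T : TorsionClass k A} {X Y Z : FDMod k A}

theorem mem_of_subsingleton (T : TorsionClass k A) (X : FDMod k A) [Subsingleton X] : X ∈ T :=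
  T.mem_of_subsingleton' X inferInstance

theorem mem_of_surjective (hX : X ∈ T) (f : X →ₗ[A] Y) (hf : Surjective f) : Y ∈ T :=
  T.mem_of_surjective' hX f hf

theorem mem_of_ker_mem (hZ : Z ∈ T) (g : X →ₗ[A] Z) (hg : Surjective g)
    (hK : ⟨g.ker⟩ ∈ T) : X ∈ T :=
  T.mem_of_ker_mem' hZ g hg hK

theorem mem_iff_of_iso : X.Iso Y → (X ∈ T ↔ Y ∈ T) := fun ⟨e⟩ =>
  ⟨fun hX => mem_of_surjective hX e.toLinearMap e.surjective,
    fun hY => mem_of_surjective hY e.symm.toLinearMap e.symm.surjective⟩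

theorem range_mem (hX : X ∈ T) (f : X →ₗ[A] Y) : ⟨f.range⟩ ∈ T :=
  mem_of_surjective hX f.rangeRestrict f.surjective_rangeRestrict

theorem quotient_mem (hX : X ∈ T) (S : Submodule A X) : ⟨X ⧸ S⟩ ∈ T :=
  mem_of_surjective hX S.mkQ S.mkQ_surjective

theorem mem_of_top_mem (h : ⟨(⊤ : Submodule A X)⟩ ∈ T) : X ∈ T :=
  mem_of_surjective h (Submodule.subtype ⊤) Submodule.topEquiv.surjective

theorem mem_of_exact (hX : X ∈ T) (hZ : Z ∈ T) {f : X →ₗ[A] Y} {g : Y →ₗ[A] Z}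
    (hfg : Exact f g) (hg : Surjective g) : Y ∈ T := by
  refine mem_of_ker_mem hZ g hg ?_
  rw [hfg.linearMap_ker_eq]
  exact range_mem hX f

theorem prod_mem (hX : X ∈ T) (hY : Y ∈ T) : ⟨X × Y⟩ ∈ T :=
  mem_of_exact (Y := ⟨X × Y⟩) hX hY Exact.inl_snd LinearMap.snd_surjective

theorem pow_mem (hX : X ∈ T) (n : ℕ) : ⟨Fin n → X⟩ ∈ T := by
  induction n with
  | zero => exact T.mem_of_subsingleton' _ inferInstanceAs (Subsingleton (Fin 0 → X))
  | succ n ih =>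
    exact mem_of_surjective (Y := ⟨Fin (n + 1) → X⟩) (prod_mem hX ih)
      (Fin.consLinearEquiv A fun _ => X).toLinearMap (LinearEquiv.surjective _)

theorem comap_mkQ_mem {S : Submodule A X} (hS : ⟨S⟩ ∈ T) {K : Submodule A (X ⧸ S)}
    (hK : ⟨K⟩ ∈ T) : ⟨K.comap S.mkQ⟩ ∈ T := by
  have hSK : S ≤ K.comap S.mkQ := S.ker_mkQ.symm.trans_le (LinearMap.ker_le_comap _)
  refine mem_of_exact (Y := ⟨K.comap S.mkQ⟩) hS hK (f := Submodule.inclusion hSK)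
    (g := S.mkQ.restrict fun _ => id) (fun x => ?_) ?_
  · rw [Subtype.ext_iff]
    exact (Submodule.Quotient.mk_eq_zero S).trans
      ⟨fun hx => ⟨⟨x, hx⟩, rfl⟩, by rintro ⟨y, rfl⟩; exact y.2⟩
  · rintro ⟨y, hy⟩
    obtain ⟨x, rfl⟩ := S.mkQ_surjective y
    exact ⟨⟨x, hy⟩, rfl⟩

theorem exists_le_ker_forall_liftQ_comp_eq_zero (T : TorsionClass k A) (φ : X →ₗ[A] Y) :
    ∃ (S : Submodule A X) (hS : S ≤ φ.ker), ⟨S⟩ ∈ T ∧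
      ∀ Z ∈ T, ∀ f : Z →ₗ[A] X ⧸ S, S.liftQ φ hS ∘ₗ f = 0 → f = 0 := by
  obtain ⟨S, ⟨hSφ, hS⟩, hmax⟩ := exists_maximal_of_wellFoundedGT
    (fun S : Submodule A X => S ≤ φ.ker ∧ ⟨S⟩ ∈ T)
    ⟨⊥, bot_le, T.mem_of_subsingleton' _ inferInstanceAs (Subsingleton (⊥ : Submodule A X))⟩
  refine ⟨S, hSφ, hS, fun Z hZ f hf => ?_⟩
  have comap_le_ker : f.range.comap S.mkQ ≤ φ.ker := by
    rintro x ⟨z, hz⟩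
    calc φ x = S.liftQ φ hSφ (f z) := by rw [hz]; rfl
      _ = 0 := LinearMap.congr_fun hf z
  have comap_le : f.range.comap S.mkQ ≤ S :=
    hmax ⟨comap_le_ker, comap_mkQ_mem hS (range_mem (Y := ⟨X ⧸ S⟩) hZ f)⟩
      (S.ker_mkQ.symm.trans_le (LinearMap.ker_le_comap _))
  ext z
  obtain ⟨x, hx⟩ := S.mkQ_surjective (f z)
  rw [← hx]
  exact (Submodule.Quotient.mk_eq_zero S).2 (comap_le ⟨z, hx.symm⟩)

/-- `Y` is torsion-free with respect to `T` if it receives no nonzero map from a member of `T`. -/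
def IsTorsionFree (T : TorsionClass k A) (Y : FDMod k A) : Prop :=
  ∀ X ∈ T, ∀ f : X →ₗ[A] Y, f = 0

theorem IsTorsionFree.of_injective (hY : T.IsTorsionFree Y) (i : X →ₗ[A] Y) (hi : Injective i) :
    T.IsTorsionFree X := fun Z hZ f => by
  ext z
  exact hi ((LinearMap.congr_fun (hY Z hZ (i ∘ₗ f)) z).trans (map_zero i).symm)

theorem IsTorsionFree.notMem (hY : T.IsTorsionFree Y) [Nontrivial Y] : Y ∉ T :=
  fun hT => one_ne_zero (α := Module.End A Y) (hY Y hT LinearMap.id)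

theorem exists_isTorsionFree_quotient (T : TorsionClass k A) (X : FDMod k A) :
    ∃ S : Submodule A X, ⟨S⟩ ∈ T ∧ T.IsTorsionFree ⟨X ⧸ S⟩ := by
  obtain ⟨S, hS, hST, hfree⟩ := T.exists_le_ker_forall_liftQ_comp_eq_zero (0 : X →ₗ[A] X)
  have liftQ_zero : S.liftQ (0 : X →ₗ[A] X) hS = 0 := Submodule.linearMap_qext _ rfl
  exact ⟨S, hST, fun Z hZ f => hfree Z hZ f (by rw [liftQ_zero, LinearMap.zero_comp])⟩

theorem exists_nontrivial_isTorsionFree_quotient (hX : X ∉ T) :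
    ∃ S : Submodule A X, Nontrivial (X ⧸ S) ∧ T.IsTorsionFree ⟨X ⧸ S⟩ := by
  obtain ⟨S, hS, hfree⟩ := T.exists_isTorsionFree_quotient X
  refine ⟨S, Submodule.Quotient.nontrivial_iff.2 ?_, hfree⟩
  rintro rfl
  exact hX (mem_of_top_mem hS)

theorem mem_of_forall_mem_range (h : ∀ x : X, ∃ Z ∈ T, ∃ f : Z →ₗ[A] X, x ∈ f.range) :
    X ∈ T := by
  by_contra hX
  obtain ⟨S, hnt, hfree⟩ := exists_nontrivial_isTorsionFree_quotient hX
  refine (Submodule.Quotient.nontrivial_iff.1 hnt) (eq_top_iff.2 fun x _ => ?_)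
  obtain ⟨Z, hZ, f, z, rfl⟩ := h x
  exact (Submodule.Quotient.mk_eq_zero S).1 (LinearMap.congr_fun (hfree Z hZ (S.mkQ ∘ₗ f)) z)

end Closure

section Order

instance : OrderTop (TorsionClass k A) where
  top := ⟨Set.univ, fun _ _ => trivial, fun _ _ _ => trivial, fun _ _ _ _ => trivial⟩
  le_top _ _ _ := trivial

instance : Min (TorsionClass k A) where
  min S T :=
    { carrier := {X | X ∈ S ∧ X ∈ T}
      mem_of_subsingleton' := fun X _ => ⟨S.mem_of_subsingleton X, T.mem_of_subsingleton X⟩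
      mem_of_surjective' := fun hX f hf =>
        ⟨mem_of_surjective hX.1 f hf, mem_of_surjective hX.2 f hf⟩
      mem_of_ker_mem' := fun hZ g hg hK =>
        ⟨mem_of_ker_mem hZ.1 g hg hK.1, mem_of_ker_mem hZ.2 g hg hK.2⟩ }

theorem mem_top (X : FDMod k A) : X ∈ (⊤ : TorsionClass k A) := trivial

theorem mem_inf {S T : TorsionClass k A} {X : FDMod k A} : X ∈ S ⊓ T ↔ X ∈ S ∧ X ∈ T := Iff.rfl

/-- The torsion class of all modules without nonzero maps to the members of `𝒩`. -/
def leftPerp (𝒩 : Set (FDMod k A)) : TorsionClass k A where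
  carrier := {X | ∀ Y ∈ 𝒩, ∀ f : X →ₗ[A] Y, f = 0}
  mem_of_subsingleton' X _ Y _ f := by
    ext x
    rw [Subsingleton.elim x 0, map_zero, map_zero]
  mem_of_surjective' hX f hf Y hY g :=
    (LinearMap.cancel_right hf).1 ((hX Y hY (g ∘ₗ f)).trans (LinearMap.zero_comp f).symm)
  mem_of_ker_mem' hZ g hg hK Y hY h := by
    obtain ⟨u, rfl⟩ := exists_comp_eq_of_ker_le hg
      fun x hx => LinearMap.congr_fun (hK Y hY (h ∘ₗ g.ker.subtype)) ⟨x, hx⟩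
    rw [hZ Y hY u, LinearMap.zero_comp]

theorem le_of_forall_isDivisionBrick {S T : TorsionClass k A}
    (h : ∀ B : FDMod k A, B.IsDivisionBrick → B ∈ S → B ∈ T) : S ≤ T := by
  refine SetLike.le_def.2 fun X hX => ?_
  by_contra hXT
  obtain ⟨N, hnt, hfree⟩ := exists_nontrivial_isTorsionFree_quotient hXT
  obtain ⟨B, hB, ⟨p, hp⟩, i, hi⟩ := FDMod.exists_isDivisionBrick (⟨X ⧸ N⟩ : FDMod k A)
  have := hB.1
  exact (hfree.of_injective i hi).notMem
    (h B hB (mem_of_surjective (quotient_mem hX N) p hp))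

theorem finite_of_divisionBrickFinite (h : DivisionBrickFinite k A) :
    Finite (TorsionClass k A) := by
  obtain ⟨m, f, hf⟩ := h
  refine Finite.of_injective (fun T : TorsionClass k A => {i | f i ∈ T}) fun S T hST => ?_
  have mem_iff (B : FDMod k A) (hB : B.IsDivisionBrick) : B ∈ S ↔ B ∈ T := by
    obtain ⟨i, hi⟩ := hf B hB
    rw [mem_iff_of_iso hi, mem_iff_of_iso hi]
    exact Set.ext_iff.1 hST i
  exact le_antisymm (le_of_forall_isDivisionBrick fun B hB => (mem_iff B hB).1)
    (le_of_forall_isDivisionBrick fun B hB => (mem_iff B hB).2)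

end Order

end TorsionClass

/-! ### Ext-projective modules -/

/-- `U` generates `X` if `X` is the sum of the images of all maps from `U`, equivalently a quotient
of a finite power of `U`. -/
def FDMod.Generates (U X : FDMod k A) : Prop :=
  traceSubmodule A U X = ⊤

theorem FDMod.generates_of_surjective {U X : FDMod k A} (f : U →ₗ[A] X) (hf : Surjective f) :
    U.Generates X :=
  top_le_iff.1 ((LinearMap.range_eq_top.2 hf).symm.trans_le (range_le_traceSubmodule f))

theorem FDMod.Generates.of_surjective {U X Y : FDMod k A} (hX : U.Generates X) (f : X →ₗ[A] Y)
    (hf : Surjective f) : U.Generates Y :=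
  top_le_iff.1 <| calc
    ⊤ = (traceSubmodule A U X).map f := by
      rw [hX, Submodule.map_top, LinearMap.range_eq_top.2 hf]
    _ ≤ traceSubmodule A U Y := map_traceSubmodule_le f

namespace TorsionClass

variable {T : TorsionClass k A} {P U V X : FDMod k A}

theorem mem_of_generates (hU : U ∈ T) (hX : U.Generates X) : X ∈ T := by
  obtain ⟨r, u, hu⟩ := U.exists_tuple_forall_mem_traceSubmodule
  refine mem_of_forall_mem_range fun x => ?_
  obtain ⟨g, hg⟩ := hu X x (hX ▸ Submodule.mem_top)
  exact ⟨⟨Fin r → U⟩, pow_mem hU r, g, u, hg⟩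

/-- `P` is Ext-projective with respect to `T`: extensions of `P` by members of `T` split, that is,
`Ext¹(P, X) = 0` for all `X` in `T`. This is encoded as a lifting property, and `P` itself need not
belong to `T`. -/
def IsExtProjective (T : TorsionClass k A) (P : FDMod k A) : Prop :=
  ∀ ⦃Y Z : FDMod k A⦄ (g : Y →ₗ[A] Z), Surjective g → ⟨g.ker⟩ ∈ T →
    ∀ h : P →ₗ[A] Z, ∃ h' : P →ₗ[A] Y, g ∘ₗ h' = h

namespace IsExtProjective

theorem of_projective (T : TorsionClass k A) (P : FDMod k A) [Module.Projective A P] :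
    T.IsExtProjective P :=
  fun _ _ g hg _ h => Module.projective_lifting_property g h hg

theorem anti {S : TorsionClass k A} (hST : S ≤ T) (hP : T.IsExtProjective P) :
    S.IsExtProjective P :=
  fun _ _ g hg hK => hP g hg (hST hK)

theorem retract {R : FDMod k A} (hP : T.IsExtProjective P) (i : R →ₗ[A] P) (r : P →ₗ[A] R)
    (hri : r ∘ₗ i = LinearMap.id) : T.IsExtProjective R := fun Y Z g hg hK h => by
  obtain ⟨h', hh'⟩ := hP g hg hK (h ∘ₗ r)
  exact ⟨h' ∘ₗ i, by rw [← LinearMap.comp_assoc, hh', LinearMap.comp_assoc, hri, h.comp_id]⟩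

theorem prod (hP : T.IsExtProjective P) (hU : T.IsExtProjective U) :
    T.IsExtProjective ⟨P × U⟩ := fun Y Z g hg hK h => by
  obtain ⟨a, ha⟩ := hP g hg hK (h ∘ₗ LinearMap.inl A P U)
  obtain ⟨b, hb⟩ := hU g hg hK (h ∘ₗ LinearMap.inr A P U)
  exact ⟨a.coprod b, by rw [LinearMap.comp_coprod, ha, hb, LinearMap.coprod_comp_inl_inr]⟩

theorem pow (hP : T.IsExtProjective P) (n : ℕ) : T.IsExtProjective ⟨Fin n → P⟩ := by
  intro Y Z g hg hK h
  choose a ha using fun j => hP g hg hK (h ∘ₗ LinearMap.single A (fun _ : Fin n => P) j)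
  refine ⟨LinearMap.lsum A (fun _ => P) ℕ a, LinearMap.pi_ext' fun j => ?_⟩
  rw [← ha j]
  exact LinearMap.ext fun x => congrArg g (LinearMap.lsum_piSingle A _ ℕ a j x)

theorem quotient_span_singleton (hV : T.IsExtProjective V) {u : V}
    (hu : ∀ X ∈ T, ∀ x : X, ∃ f : V →ₗ[A] X, f u = x) :
    T.IsExtProjective ⟨V ⧸ Submodule.span A {u}⟩ := by
  intro Y Z g hg hK h
  let q := (Submodule.span A {u}).mkQ
  have hq : q u = 0 := (Submodule.Quotient.mk_eq_zero _).2 (Submodule.mem_span_singleton_self u)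
  obtain ⟨w, hw⟩ := hV g hg hK (h ∘ₗ q)
  have hwu : w u ∈ g.ker := by
    rw [LinearMap.mem_ker, ← LinearMap.comp_apply, hw, LinearMap.comp_apply, hq, map_zero]
  obtain ⟨v, hv⟩ := hu _ hK ⟨w u, hwu⟩
  refine ⟨Submodule.liftQSpanSingleton u (w - g.ker.subtype ∘ₗ v) (by simp [hv]), ?_⟩
  refine Submodule.linearMap_qext _ (LinearMap.ext fun x => ?_)
  calc g (w x - v x) = g (w x) := by simp
    _ = h (q x) := LinearMap.congr_fun hw x

end IsExtProjective

/-- Every member of `T` is a quotient, with kernel in `T`, of a member of `T` that is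
Ext-projective with respect to `T`. -/
def HasEnoughExtProjectives (T : TorsionClass k A) : Prop :=
  ∀ X ∈ T, ∃ P ∈ T, T.IsExtProjective P ∧ ∃ p : P →ₗ[A] X, Surjective p ∧ ⟨p.ker⟩ ∈ T

theorem hasEnoughExtProjectives_top [FiniteDimensional k A] :
    (⊤ : TorsionClass k A).HasEnoughExtProjectives := fun X _ => by
  obtain ⟨P, p, hP, hp⟩ := X.exists_surjective_of_projective
  exact ⟨P, mem_top P, .of_projective ⊤ P, p, hp, mem_top _⟩

theorem hasEnoughExtProjectives_of_universal (hV : V ∈ T) (hVE : T.IsExtProjective V) (u : V)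
    (hu : ∀ X ∈ T, ∀ x : X, ∃ f : V →ₗ[A] X, f u = x) : T.HasEnoughExtProjectives := by
  intro X hX
  let C : FDMod k A := ⟨V ⧸ Submodule.span A {u}⟩
  let q : V →ₗ[A] C := (Submodule.span A {u}).mkQ
  have hq : q u = 0 := (Submodule.Quotient.mk_eq_zero _).2 (Submodule.mem_span_singleton_self u)
  let P : FDMod k A := ⟨V × C⟩
  have hP : P ∈ T := prod_mem hV (quotient_mem hV _)
  obtain ⟨s, p, hp⟩ := P.exists_rightApproximation X
  have lift_V (f : V →ₗ[A] X) : ∃ f', p ∘ₗ f' = f := by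
    obtain ⟨f', hf'⟩ := hp (f ∘ₗ LinearMap.fst A V C)
    exact ⟨f' ∘ₗ LinearMap.inl A V C, by
      rw [← LinearMap.comp_assoc, hf', LinearMap.comp_assoc, LinearMap.fst_comp_inl, f.comp_id]⟩
  have lift_C (f : C →ₗ[A] X) : ∃ f', p ∘ₗ f' = f := by
    obtain ⟨f', hf'⟩ := hp (f ∘ₗ LinearMap.snd A V C)
    exact ⟨f' ∘ₗ LinearMap.inr A V C, by
      rw [← LinearMap.comp_assoc, hf', LinearMap.comp_assoc, LinearMap.snd_comp_inr, f.comp_id]⟩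
  refine ⟨⟨Fin s → P⟩, pow_mem hP s, (hVE.prod (hVE.quotient_span_singleton hu)).pow s, p, ?_,
    mem_of_forall_mem_range fun y => ⟨V, hV, ?_⟩⟩
  · intro x
    obtain ⟨f, rfl⟩ := hu X hX x
    obtain ⟨f', rfl⟩ := lift_V f
    exact ⟨f' u, rfl⟩
  · obtain ⟨g, hg⟩ := hu ⟨Fin s → P⟩ (pow_mem hP s) y
    have hpg : (p ∘ₗ g) u = 0 := by rw [LinearMap.comp_apply, hg]; exact y.2
    obtain ⟨h, hh⟩ := lift_C (Submodule.liftQSpanSingleton u (p ∘ₗ g) hpg)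
    have hmem (x : V) : (g - h ∘ₗ q) x ∈ p.ker := by
      have hx : p (h (q x)) = p (g x) := LinearMap.congr_fun hh (q x)
      simp [hx]
    exact ⟨(g - h ∘ₗ q).codRestrict p.ker hmem, u, Subtype.ext (by simp [hg, hq])⟩

theorem hasEnoughExtProjectives_of_generator (hU : U ∈ T) (hUE : T.IsExtProjective U)
    (hgen : ∀ X ∈ T, U.Generates X) : T.HasEnoughExtProjectives := by
  obtain ⟨r, u, hu⟩ := U.exists_tuple_forall_mem_traceSubmodule
  exact hasEnoughExtProjectives_of_universal (V := ⟨Fin r → U⟩) (pow_mem hU r) (hUE.pow r) u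
    fun X hX x => hu X x (hgen X hX ▸ Submodule.mem_top)

/-- The torsion class `Fac U` of all modules generated by an Ext-projective member `U` of some
torsion class. -/
def fac (hU : U ∈ T) (hUE : T.IsExtProjective U) : TorsionClass k A where
  carrier := {X | U.Generates X}
  mem_of_subsingleton' X _ := Subsingleton.elim _ _
  mem_of_surjective' hX f hf := hX.of_surjective f hf
  mem_of_ker_mem' {X Z} hZ g hg hK := by
    have le_map : traceSubmodule A U Z ≤ (traceSubmodule A U X).map g := by
      refine iSup_le fun f => ?_
      obtain ⟨f', rfl⟩ := hUE g hg (mem_of_generates hU hK) f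
      rw [LinearMap.range_comp]
      exact Submodule.map_mono (range_le_traceSubmodule f')
    have ker_le : g.ker ≤ traceSubmodule A U X := by
      have h := map_traceSubmodule_le (L := U) g.ker.subtype
      rwa [show traceSubmodule A U g.ker = ⊤ from hK, Submodule.map_subtype_top] at h
    refine eq_top_iff.2 fun x _ => ?_
    obtain ⟨y, hy, hyx⟩ := le_map (hZ.ge (Submodule.mem_top (x := g x)))
    have hxy : x - y ∈ g.ker := by simp [hyx]
    simpa using add_mem (ker_le hxy) hy

end TorsionClass

/-! ### Covers of torsion classes -/

namespace TorsionClass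

variable {T T₁ : TorsionClass k A} {B X Y Z : FDMod k A}

theorem HasEnoughExtProjectives.exists_isRightMinimal (hT : T.HasEnoughExtProjectives)
    (hX : X ∈ T) : ∃ P ∈ T, T.IsExtProjective P ∧
      ∃ p : P →ₗ[A] X, Surjective p ∧ ⟨p.ker⟩ ∈ T ∧ IsRightMinimal p := by
  obtain ⟨P, hP, hPE, p, hp, hK⟩ := hT X hX
  obtain ⟨S, r, hr, hpr, hmin⟩ := exists_retract_isRightMinimal p
  have r_apply (x : S) : r x = x := LinearMap.congr_fun hr x
  have p_r_apply (x : P) : p (r x) = p x := LinearMap.congr_fun hpr x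
  refine ⟨⟨S⟩, mem_of_surjective hP r fun x => ⟨x, r_apply x⟩, hPE.retract S.subtype r hr,
    p ∘ₗ S.subtype, fun y => ?_, ?_, hmin⟩
  · obtain ⟨x, rfl⟩ := hp y
    exact ⟨r x, p_r_apply x⟩
  · exact mem_of_surjective (Y := ⟨(p ∘ₗ S.subtype).ker⟩) hK
      (r.restrict fun x hx => (p_r_apply x).trans hx)
      fun x => ⟨⟨x.1, x.2⟩, Subtype.ext (r_apply x)⟩

theorem mem_of_covBy (h : T₁ ⋖ T) (hY : Y ∈ T) [Nontrivial Y] (hfree : T₁.IsTorsionFree Y)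
    (hZ : Z ∈ T) (hZY : ∀ f : Z →ₗ[A] Y, f = 0) : Z ∈ T₁ := by
  have le_inf : T₁ ≤ T ⊓ leftPerp {Y} := fun W hW =>
    ⟨h.le hW, by rintro _ rfl; exact hfree W hW⟩
  have inf_le : T ⊓ leftPerp {Y} ≤ T := fun W hW => (mem_inf.1 hW).1
  rcases h.eq_or_eq le_inf inf_le with heq | heq
  · exact heq.le ⟨hZ, by rintro _ rfl; exact hZY⟩
  · have hY' : Y ∈ leftPerp {Y} := (heq.ge hY).2
    exact absurd (hY' Y rfl LinearMap.id) (one_ne_zero (α := Module.End A Y))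

theorem exists_minimal_isTorsionFree (h : T₁ < T) :
    ∃ B ∈ T, Nontrivial B ∧ T₁.IsTorsionFree B ∧
      ∀ Y ∈ T, ∀ φ : Y →ₗ[A] B, φ ≠ 0 → Surjective φ := by
  obtain ⟨X, hX, hX₁⟩ := SetLike.exists_of_lt h
  obtain ⟨S, hnt, hfree⟩ := exists_nontrivial_isTorsionFree_quotient hX₁
  obtain ⟨B, ⟨hB, hnt, hfree⟩, hmin⟩ := exists_minimalFor_of_wellFoundedLT
    (fun B : FDMod k A => B ∈ T ∧ Nontrivial B ∧ T₁.IsTorsionFree B) (fun B => finrank k B)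
    ⟨⟨X ⧸ S⟩, quotient_mem hX S, hnt, hfree⟩
  refine ⟨B, hB, hnt, hfree, fun Y hY φ hφ => ?_⟩
  by_contra hsurj
  have hlt : finrank k φ.range < finrank k B :=
    Submodule.finrank_lt (s := φ.range.restrictScalars k) (by simpa [LinearMap.range_eq_top])
  refine hlt.not_ge (hmin (j := ⟨φ.range⟩) ⟨range_mem hY φ, ?_, ?_⟩ hlt.le)
  · exact Submodule.nontrivial_iff_ne_bot.2 (mt LinearMap.range_eq_bot.1 hφ)
  · exact hfree.of_injective φ.range.subtype Subtype.val_injective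

theorem injective_of_forall_comp_eq_zero (h : T₁ ⋖ T) (hB : B ∈ T) [Nontrivial B]
    (hfree : T₁.IsTorsionFree B) (hsurj : ∀ Y ∈ T, ∀ φ : Y →ₗ[A] B, φ ≠ 0 → Surjective φ)
    (hY : Y ∈ T) {φ : Y →ₗ[A] B} (hφ : φ ≠ 0)
    (hmono : ∀ Z ∈ T, ∀ f : Z →ₗ[A] Y, φ ∘ₗ f = 0 → f = 0) : Injective φ := by
  have : Nontrivial Y := (hsurj Y hY φ hφ).nontrivial
  have hYfree : T₁.IsTorsionFree Y := fun Z hZ f =>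
    hmono Z (h.le hZ) f (hfree Z hZ _)
  obtain ⟨β, hβ⟩ : ∃ β : B →ₗ[A] Y, β ≠ 0 := by
    by_contra! hzero
    exact hfree.notMem (mem_of_covBy h hY hYfree hB hzero)
  have hbij : Bijective (φ ∘ₗ β) :=
    IsNoetherian.bijective_of_surjective_endomorphism _ (hsurj B hB _ (mt (hmono B hB β) hβ))
  let e := LinearEquiv.ofBijective (φ ∘ₗ β) hbij
  have hsection : LinearMap.id - β ∘ₗ e.symm.toLinearMap ∘ₗ φ = 0 := by
    refine hmono Y hY _ (LinearMap.ext fun y => ?_)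
    calc φ (y - β (e.symm (φ y))) = φ y - e (e.symm (φ y)) := map_sub φ _ _
      _ = 0 := by rw [e.apply_symm_apply, sub_self]
  exact LeftInverse.injective (g := β ∘ e.symm)
    fun y => (sub_eq_zero.1 (LinearMap.congr_fun hsection y)).symm

/-- `B` is a simple object of `T`: it is a nonzero member of `T`, and every nonzero map to `B` from
a member of `T` is surjective with kernel in `T`. -/
structure IsSimpleObject (T : TorsionClass k A) (B : FDMod k A) : Prop where
  mem : B ∈ T
  nontrivial : Nontrivial B
  surjective : ∀ Y ∈ T, ∀ φ : Y →ₗ[A] B, φ ≠ 0 → Surjective φ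
  ker_mem : ∀ Y ∈ T, ∀ φ : Y →ₗ[A] B, φ ≠ 0 → ⟨φ.ker⟩ ∈ T

theorem exists_isSimpleObject_isTorsionFree (h : T₁ ⋖ T) :
    ∃ B, T.IsSimpleObject B ∧ T₁.IsTorsionFree B := by
  obtain ⟨B, hB, hnt, hfree, hsurj⟩ := exists_minimal_isTorsionFree h.lt
  refine ⟨B, ⟨hB, hnt, hsurj, fun Y hY φ hφ => ?_⟩, hfree⟩
  obtain ⟨S, hSφ, hS, hmono⟩ := T.exists_le_ker_forall_liftQ_comp_eq_zero φ
  have hφ' : S.liftQ φ hSφ ≠ 0 := fun h0 =>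
    hφ (by rw [← S.liftQ_mkQ φ hSφ, h0, LinearMap.zero_comp])
  have hinj := injective_of_forall_comp_eq_zero (Y := ⟨Y ⧸ S⟩) h hB hfree hsurj
    (quotient_mem hY S) hφ' hmono
  obtain rfl : S = φ.ker := hSφ.antisymm fun x hx =>
    (Submodule.Quotient.mk_eq_zero S).1 (hinj (hx.trans (map_zero _).symm))
  exact hS

theorem HasEnoughExtProjectives.exists_surjective_of_covBy (hT : T.HasEnoughExtProjectives)
    (h : T₁ ⋖ T) (hX : X ∈ T₁) :
    ∃ P ∈ T₁, T.IsExtProjective P ∧ ∃ p : P →ₗ[A] X, Surjective p := by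
  obtain ⟨B, hB, hfree⟩ := exists_isSimpleObject_isTorsionFree h
  obtain ⟨P, hP, hPE, π, hπ, hK, hmin⟩ :=
    hT.exists_isRightMinimal (h.le hX)
  have := hB.nontrivial
  refine ⟨P, mem_of_covBy h hB.mem hfree hP fun φ => ?_, hPE, π, hπ⟩
  by_contra hφ
  let ι := π.ker.subtype
  have hφι : φ ∘ₗ ι ≠ 0 := fun h0 => hφ <| by
    obtain ⟨w, rfl⟩ := exists_comp_eq_of_ker_le hπ
      fun x hx => LinearMap.congr_fun h0 ⟨x, hx⟩
    rw [hfree X hX w, LinearMap.zero_comp]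
  obtain ⟨ψ, hψ⟩ := hPE (Y := ⟨π.ker⟩) (φ ∘ₗ ι) (hB.surjective _ hK _ hφι)
    (hB.ker_mem _ hK _ hφι) φ
  -- The automorphism `1 - ι ∘ ψ` is annihilated by `φ`.
  have hπθ : π ∘ₗ (LinearMap.id - ι ∘ₗ ψ) = π := by
    ext x
    simp [ι]
  refine hφ ((LinearMap.cancel_right (hmin _ hπθ).surjective).1 (LinearMap.ext fun x => ?_))
  calc φ (x - ψ x) = φ x - (φ ∘ₗ ι ∘ₗ ψ) x := map_sub φ _ _
    _ = 0 := sub_eq_zero.2 (LinearMap.congr_fun hψ x).symm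

theorem HasEnoughExtProjectives.exists_generator_of_covBy [Finite (TorsionClass k A)]
    (hT : T.HasEnoughExtProjectives) (h : T₁ ⋖ T) :
    ∃ U ∈ T₁, T.IsExtProjective U ∧ ∀ X ∈ T₁, U.Generates X := by
  have hle {X : FDMod k A} (hX : X ∈ T₁) : X ∈ T := h.le hX
  obtain ⟨_, ⟨U, hU, hUE, rfl⟩, hmax⟩ := exists_maximal_of_wellFoundedGT
    (fun F => ∃ (U : FDMod k A) (hU : U ∈ T₁) (hUE : T.IsExtProjective U), F = fac (hle hU) hUE)
    ⟨_, ⟨PUnit⟩, T₁.mem_of_subsingleton' _ inferInstanceAs (Subsingleton PUnit),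
      .of_projective T ⟨PUnit⟩, rfl⟩
  refine ⟨U, hU, hUE, fun X hX => ?_⟩
  obtain ⟨P, hP, hPE, p, hp⟩ := hT.exists_surjective_of_covBy h hX
  let UP : FDMod k A := ⟨U × P⟩
  have hUP : UP ∈ T₁ := prod_mem hU hP
  have fac_le : fac (hle hU) hUE ≤ fac (hle hUP) (hUE.prod hPE) :=
    SetLike.le_def.2 fun Z hZ => mem_of_generates
      (FDMod.generates_of_surjective (U := UP) (LinearMap.fst A U P) LinearMap.fst_surjective) hZ
  exact SetLike.le_def.1 (hmax ⟨UP, hUP, hUE.prod hPE, rfl⟩ fac_le)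
    (FDMod.generates_of_surjective (U := UP) (p ∘ₗ LinearMap.snd A U P)
      (hp.comp LinearMap.snd_surjective))

theorem HasEnoughExtProjectives.of_covBy [Finite (TorsionClass k A)]
    (hT : T.HasEnoughExtProjectives) (h : T₁ ⋖ T) : T₁.HasEnoughExtProjectives := by
  obtain ⟨U, hU, hUE, hgen⟩ := hT.exists_generator_of_covBy h
  exact hasEnoughExtProjectives_of_generator hU (hUE.anti h.le) hgen

theorem hasEnoughExtProjectives [FiniteDimensional k A] [Finite (TorsionClass k A)]
    (T : TorsionClass k A) : T.HasEnoughExtProjectives := by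
  induction T using WellFoundedGT.induction with
  | ind T ih =>
    by_cases hmax : IsMax T
    · rw [hmax.eq_top]
      exact hasEnoughExtProjectives_top
    · obtain ⟨T', hTT'⟩ := exists_covBy_of_wellFoundedLT hmax
      exact (ih T' hTT'.lt).of_covBy hTT'

end TorsionClass

/-! ### Presentations of Ext-projective modules -/

theorem finrank_eq_add_of_exact {K V₁ V₂ V₃ : Type*} [DivisionRing K] [AddCommGroup V₁]
    [Module K V₁] [AddCommGroup V₂] [Module K V₂] [FiniteDimensional K V₂] [AddCommGroup V₃]
    [Module K V₃] {f : V₁ →ₗ[K] V₂} {g : V₂ →ₗ[K] V₃} (hf : Injective f) (hfg : Exact f g)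
    (hg : Surjective g) : finrank K V₂ = finrank K V₁ + finrank K V₃ := by
  rw [← LinearMap.finrank_range_add_finrank_ker g, hfg.linearMap_ker_eq,
    LinearMap.finrank_range_of_inj hf, LinearMap.range_eq_top.2 hg, finrank_top, add_comm]

namespace FDMod

/-- The dimension over `k` of `Hom_A(X, Y)`. For `X` projective it is an additive function
of `Y`. -/
noncomputable def homDim (X Y : FDMod k A) : ℕ :=
  finrank k (X →ₗ[A] Y)

theorem exists_projectiveCover [FiniteDimensional k A] (X : FDMod k A) :
    ∃ (P : FDMod k A) (ρ : P →ₗ[A] X), Module.Projective A P ∧ Surjective ρ ∧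
      IsRightMinimal ρ := by
  obtain ⟨F, p, hF, hp⟩ := X.exists_surjective_of_projective
  obtain ⟨S, r, hr, hpr, hmin⟩ := exists_retract_isRightMinimal p
  refine ⟨⟨S⟩, p ∘ₗ S.subtype, Module.Projective.of_split S.subtype r hr, fun y => ?_, hmin⟩
  obtain ⟨x, rfl⟩ := hp y
  exact ⟨r x, LinearMap.congr_fun hpr x⟩

end FDMod

namespace TorsionClass.IsExtProjective

variable {T : TorsionClass k A} {P Q R X : FDMod k A}

theorem exists_extension (hP : T.IsExtProjective P) (hX : X ∈ T) {π : Q →ₗ[A] P}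
    (hπ : Surjective π) (γ : π.ker →ₗ[A] X) : ∃ δ : Q →ₗ[A] X, δ ∘ₗ π.ker.subtype = γ := by
  obtain ⟨G, g, j, a, hg, hj, hjg, hga, haj⟩ := exists_pushout π hπ γ
  have hK : ⟨g.ker⟩ ∈ T := by
    rw [← hjg]
    exact range_mem (Y := ⟨(Q × X) ⧸ G⟩) hX j
  obtain ⟨s, hs⟩ := hP (Y := ⟨(Q × X) ⧸ G⟩) g hg hK LinearMap.id
  have hmem (x : Q) : (a - s ∘ₗ π) x ∈ j.range := by
    have h₁ : g (a x) = π x := LinearMap.congr_fun hga x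
    have h₂ : g (s (π x)) = π x := LinearMap.congr_fun hs (π x)
    simp [hjg, h₁, h₂]
  let e := LinearEquiv.ofInjective j hj
  refine ⟨e.symm.toLinearMap ∘ₗ (a - s ∘ₗ π).codRestrict j.range hmem, LinearMap.ext fun x => ?_⟩
  refine (LinearEquiv.symm_apply_eq e).2 (Subtype.ext ?_)
  calc a x - s (π x) = a x := by simp
    _ = j (γ x) := LinearMap.congr_fun haj x

theorem exists_range_sub_le (hP : T.IsExtProjective P) (hX : X ∈ T) [Module.Projective A Q]
    {π : Q →ₗ[A] P} (hπ : Surjective π) {ρ : R →ₗ[A] π.ker} (hρ : Surjective ρ)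
    (g : R →ₗ[A] X) :
    ∃ h : Q →ₗ[A] X, (g - h ∘ₗ π.ker.subtype ∘ₗ ρ).range ≤ ρ.ker.map g := by
  let M := ρ.ker.map g
  obtain ⟨γ, hγ⟩ : ∃ γ, γ ∘ₗ ρ = M.mkQ ∘ₗ g := exists_comp_eq_of_ker_le hρ
    fun x hx => (Submodule.Quotient.mk_eq_zero M).2 ⟨x, hx, rfl⟩
  obtain ⟨δ, hδ⟩ := hP.exists_extension (X := ⟨X ⧸ M⟩) (quotient_mem hX M) hπ γ
  obtain ⟨h, hh⟩ := Module.projective_lifting_property M.mkQ δ M.mkQ_surjective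
  refine ⟨h, ?_⟩
  rintro _ ⟨x, rfl⟩
  refine (Submodule.Quotient.eq M).1 ?_
  calc M.mkQ (g x) = γ (ρ x) := (LinearMap.congr_fun hγ x).symm
    _ = δ (ρ x) := (LinearMap.congr_fun hδ (ρ x)).symm
    _ = M.mkQ (h (ρ x)) := (LinearMap.congr_fun hh (ρ x)).symm

theorem exists_comp_eq (hP : T.IsExtProjective P) (hX : X ∈ T) [Module.Projective A Q]
    [Module.Projective A R] {π : Q →ₗ[A] P} (hπ : Surjective π) {ρ : R →ₗ[A] π.ker}
    (hρ : Surjective ρ) (hmin : IsRightMinimal ρ) (g : R →ₗ[A] X) :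
    ∃ h : Q →ₗ[A] X, h ∘ₗ π.ker.subtype ∘ₗ ρ = g := by
  induction hS : g.range using WellFoundedLT.induction generalizing g with
  | ind S ih =>
    subst hS
    by_cases hg : g = 0
    · exact ⟨0, by rw [hg, LinearMap.zero_comp]⟩
    have map_ker_lt : ρ.ker.map g < g.range :=
      LinearMap.map_le_range.lt_of_ne (mt (hmin.eq_zero_of_map_ker_eq_range hρ) hg)
    obtain ⟨h, hh⟩ := hP.exists_range_sub_le hX hπ hρ g
    obtain ⟨h', hh'⟩ := ih _ (hh.trans_lt map_ker_lt) _ rfl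
    exact ⟨h' + h, by rw [LinearMap.add_comp, hh', sub_add_cancel]⟩

theorem exists_presentation [FiniteDimensional k A] (hP : T.IsExtProjective P) :
    ∃ Q R : FDMod k A, Module.Projective A Q ∧ Module.Projective A R ∧
      (∀ X ∈ T, Q.homDim X = P.homDim X + R.homDim X) ∧
      ∀ X : FDMod k A, (∀ f : P →ₗ[A] X, f = 0) → Q.homDim X ≤ R.homDim X := by
  obtain ⟨Q, π, hQ, hπ, -⟩ := P.exists_projectiveCover
  obtain ⟨R, ρ, hR, hρ, hmin⟩ := FDMod.exists_projectiveCover (⟨π.ker⟩ : FDMod k A)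
  let d (X : FDMod k A) : (Q →ₗ[A] X) →ₗ[k] R →ₗ[A] X := .lcomp k X (π.ker.subtype ∘ₗ ρ)
  have exact (X : FDMod k A) : Exact (LinearMap.lcomp k X π) (d X) := by
    refine fun f => ⟨fun hf => exists_comp_eq_of_ker_le hπ fun x hx => ?_, ?_⟩
    · obtain ⟨y, hy⟩ := hρ ⟨x, hx⟩
      simpa [hy, d] using LinearMap.congr_fun hf y
    · rintro ⟨f, rfl⟩
      ext x
      simp [d]
  refine ⟨Q, R, hQ, hR, fun X hX => ?_, fun X hPX => ?_⟩
  · exact finrank_eq_add_of_exact (LinearMap.lcomp_injective_of_surjective π hπ) (exact X)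
      (hP.exists_comp_eq hX hπ hρ hmin)
  · refine LinearMap.finrank_le_finrank_of_injective ((injective_iff_map_eq_zero (d X)).2 ?_)
    intro f hf
    obtain ⟨u, rfl⟩ := (exact X f).1 hf
    rw [hPX u, map_zero]

end TorsionClass.IsExtProjective

/-! ### Hom-orthogonal families -/

namespace FDMod

theorem homDim_eq_add_of_surjective (Q : FDMod k A) [Module.Projective A Q] {X Z : FDMod k A}
    {g : X →ₗ[A] Z} (hg : Surjective g) : Q.homDim X = Q.homDim ⟨g.ker⟩ + Q.homDim Z := by
  have comp_injective : Injective (LinearMap.compRight k (M := Q) g.ker.subtype) :=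
    fun _ _ h => LinearMap.ext fun x => Subtype.ext (LinearMap.congr_fun h x)
  refine finrank_eq_add_of_exact comp_injective (g := LinearMap.compRight k g) (fun f => ?_)
    fun h => Module.projective_lifting_property g h hg
  refine ⟨fun hf => ⟨f.codRestrict g.ker (LinearMap.congr_fun hf), rfl⟩, ?_⟩
  rintro ⟨f, rfl⟩
  exact LinearMap.ext fun x => (f x).2

theorem homDim_eq_zero_of_subsingleton (Q X : FDMod k A) [Subsingleton X] : Q.homDim X = 0 :=
  have : Subsingleton (Q →ₗ[A] X) := ⟨fun _ _ => LinearMap.ext fun _ => Subsingleton.elim _ _⟩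
  finrank_zero_of_subsingleton

theorem exists_surjective_simple_and_finrank_ker_lt {κ : Type*} {S : κ → FDMod k A}
    (hS : ∀ T : FDMod k A, IsSimpleModule A T → ∃ i, T.Iso (S i)) (X : FDMod k A) [Nontrivial X] :
    ∃ (i : κ) (g : X →ₗ[A] S i), Surjective g ∧ finrank k g.ker < finrank k X := by
  obtain ⟨m, hm⟩ := IsCoatomic.exists_coatom (Submodule A X)
  obtain ⟨i, ⟨e⟩⟩ := hS ⟨X ⧸ m⟩ (isSimpleModule_iff_isCoatom.2 hm)
  have ker_eq : (e.toLinearMap ∘ₗ m.mkQ).ker = m := by rw [LinearEquiv.ker_comp, m.ker_mkQ]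
  refine ⟨i, e.toLinearMap ∘ₗ m.mkQ, e.surjective.comp m.mkQ_surjective, ?_⟩
  rw [ker_eq]
  exact Submodule.finrank_lt (s := m.restrictScalars k) (by simpa using hm.1)

theorem exists_multiplicities {κ : Type*} [Fintype κ] {S : κ → FDMod k A}
    (hS : ∀ T : FDMod k A, IsSimpleModule A T → ∃ i, T.Iso (S i)) (X : FDMod k A) :
    ∃ m : κ → ℕ, ∀ Q : FDMod k A, Module.Projective A Q →
      Q.homDim X = ∑ i, m i * Q.homDim (S i) := by
  classical
  induction hd : finrank k X using Nat.strong_induction_on generalizing X with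
  | _ d ih =>
    subst hd
    cases subsingleton_or_nontrivial X with
    | inl => exact ⟨0, fun Q _ => by simp [Q.homDim_eq_zero_of_subsingleton X]⟩
    | inr =>
      obtain ⟨i, g, hg, hlt⟩ := exists_surjective_simple_and_finrank_ker_lt hS X
      obtain ⟨m, hm⟩ := ih _ hlt ⟨g.ker⟩ rfl
      refine ⟨m + Pi.single i 1, fun Q hQ => ?_⟩
      simp [Q.homDim_eq_add_of_surjective hg, hm Q hQ, add_mul, Finset.sum_add_distrib,
        Pi.single_apply]

end FDMod

theorem exists_pos_and_sum_smul_eq_zero {K V ι : Type*} [DivisionRing K] [LinearOrder K]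
    [IsStrictOrderedRing K] [AddCommGroup V] [Module K V] [FiniteDimensional K V] [Fintype ι]
    (v : ι → V) (h : finrank K V < Fintype.card ι) :
    ∃ c : ι → K, (∃ i, 0 < c i) ∧ ∑ i, c i • v i = 0 := by
  have hv : ¬LinearIndependent K v := fun hv => h.not_ge hv.fintype_card_le_finrank
  obtain ⟨c, hc, i, hi⟩ := Fintype.not_linearIndependent_iff.1 hv
  rcases hi.lt_or_gt with hneg | hpos
  · exact ⟨-c, ⟨i, neg_pos.2 hneg⟩, by simp [hc]⟩
  · exact ⟨c, ⟨i, hpos⟩, hc⟩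

theorem FDMod.exists_sum_homDim_eq_zero {κ ι : Type*} [Fintype κ] [Fintype ι]
    {S : κ → FDMod k A} (hS : ∀ T : FDMod k A, IsSimpleModule A T → ∃ i, T.Iso (S i))
    (Y : ι → FDMod k A) (hκι : Fintype.card κ < Fintype.card ι) :
    ∃ c : ι → ℚ, (∃ j, 0 < c j) ∧ ∀ Q : FDMod k A, Module.Projective A Q →
      ∑ j, c j * Q.homDim (Y j) = 0 := by
  choose m hm using fun j => exists_multiplicities hS (Y j)
  obtain ⟨c, hpos, hc⟩ := exists_pos_and_sum_smul_eq_zero (K := ℚ)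
    (fun j i => (m j i : ℚ)) (by simpa using hκι)
  refine ⟨c, hpos, fun Q hQ => ?_⟩
  have hc (i : κ) : ∑ j, c j * m j i = 0 := by simpa using congrFun hc i
  calc ∑ j, c j * (Q.homDim (Y j) : ℚ)
      = ∑ j, ∑ i, c j * m j i * Q.homDim (S i) := by
        simp only [hm _ Q hQ, Nat.cast_sum, Nat.cast_mul, Finset.mul_sum, mul_assoc]
    _ = ∑ i, (∑ j, c j * m j i) * Q.homDim (S i) := by
        rw [Finset.sum_comm]
        simp only [Finset.sum_mul]
    _ = 0 := by simp only [hc, zero_mul, Finset.sum_const_zero]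

namespace HomOrthFamily

variable {ι : Type*} {Y : ι → FDMod k A}

theorem comp_injective (hY : HomOrthFamily Y) {κ : Type*} {f : κ → ι} (hf : Injective f) :
    HomOrthFamily (Y ∘ f) :=
  ⟨fun i => hY.1 (f i), fun _ _ h => hY.2.1 _ _ (hf.ne h), fun _ _ h => hY.2.2 _ _ (hf.ne h)⟩

theorem card_le [FiniteDimensional k A] [Finite (TorsionClass k A)] [Fintype ι]
    (hY : HomOrthFamily Y) {κ : Type*} [Fintype κ] {S : κ → FDMod k A}
    (hS : ∀ T : FDMod k A, IsSimpleModule A T → ∃ i, T.Iso (S i)) :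
    Fintype.card ι ≤ Fintype.card κ := by
  by_contra! hκι
  obtain ⟨c, ⟨i, hi⟩, hc⟩ := FDMod.exists_sum_homDim_eq_zero hS Y hκι
  let T : TorsionClass k A := .leftPerp (Y '' {j | c j < 0})
  have mem_T {j : ι} (hj : 0 < c j) : Y j ∈ T := by
    rintro _ ⟨l, hl, rfl⟩
    exact (hY.2.2 j l (by rintro rfl; exact lt_asymm hj hl)).1
  obtain ⟨P, hPT, hP, p, hp, -⟩ := T.hasEnoughExtProjectives (Y i) (mem_T hi)
  obtain ⟨Q, R, hQ, hR, hpos, hneg⟩ := hP.exists_presentation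
  have homDim_pos : 0 < P.homDim (Y i) := by
    have := hY.1 i
    obtain ⟨y, hy⟩ := exists_ne (0 : Y i)
    obtain ⟨x, rfl⟩ := hp y
    have : Nontrivial (P →ₗ[A] Y i) := nontrivial_of_ne p 0 (by rintro rfl; exact hy rfl)
    exact finrank_pos
  -- The difference `homDim Q - homDim R` equals `homDim P` on the `Y j` with `0 < c j`, which lie
  -- in `T`, and is at most `0` on the `Y j` with `c j < 0`, which receive no map from `P`.
  have sum_pos : 0 < ∑ j, c j * ((Q.homDim (Y j) : ℚ) - R.homDim (Y j)) := by
    refine Finset.sum_pos' (fun j _ => ?_) ⟨i, Finset.mem_univ i, ?_⟩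
    · rcases lt_trichotomy (c j) 0 with hj | hj | hj
      · have := hneg (Y j) (hPT (Y j) ⟨j, hj, rfl⟩)
        exact mul_nonneg_of_nonpos_of_nonpos hj.le (sub_nonpos.2 (by exact_mod_cast this))
      · rw [hj, zero_mul]
      · have := hpos (Y j) (mem_T hj)
        exact mul_nonneg hj.le (by simp [this])
    · have := hpos (Y i) (mem_T hi)
      exact mul_pos hi (by simp [this, homDim_pos])
  refine sum_pos.ne' ?_
  simp only [mul_sub, Finset.sum_sub_distrib, hc Q hQ, hc R hR, sub_self]

end HomOrthFamily

theorem stmt2_general [FiniteDimensional k A] (n : ℕ) (hrank : HasRank k A n)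
    (hfin : DivisionBrickFinite k A) :
    (∀ (I : Type v) (X : I → FDMod k A), HomOrthFamily X → ∀ s : Finset I, s.card ≤ n) ∧
    (∀ Y : Fin (n + 1) → FDMod k A, ¬ HomOrthFamily Y) := by
  obtain ⟨S, -, -, hS⟩ := hrank
  have := TorsionClass.finite_of_divisionBrickFinite hfin
  refine ⟨fun I X hX s => ?_, fun Y hY => ?_⟩
  · simpa using (hX.comp_injective (Subtype.val_injective (p := (· ∈ s)))).card_le hS
  · simpa using hY.card_le hS

/-- If `A` is a brick-finite finite-dimensional algebra over an
algebraically closed field, of rank `n` (i.e. with exactly `n` isomorphism classes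
of simple modules), then every Hom-orthogonal set of finite-dimensional `A`-modules
has at most `n` elements; in particular, there is no Hom-orthogonal set consisting
of `n + 1` modules. -/
theorem stmt2 {k A : Type u} [Field k] [IsAlgClosed k] [Ring A] [Algebra k A]
    [FiniteDimensional k A] (n : ℕ) (hrank : HasRank k A n) (hbf : BrickFinite k A) :
    (∀ (I : Type v) (X : I → FDMod k A), HomOrthFamily X → ∀ s : Finset I, s.card ≤ n) ∧
    (∀ Y : Fin (n + 1) → FDMod k A, ¬ HomOrthFamily Y) :=
  stmt2_general n hrank hbf.divisionBrickFinite
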